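/- arXiv:1312.7819 — 3 statements merged into one kernel-verified Lean document; each statement's English description precedes it below -/
import Mathlib

section
/- Let M = ℝ³ \ B(0,1) be the complement of the open unit ball, and let A > 0 be a constant such that ‖v‖_{L⁶(ℝ³)} ≤ A‖∇v‖_{L²(ℝ³)} for every continuously differentiable function v : ℝ³ → ℝ with compact support. Then for every continuously differentiable function u : ℝ³ → ℝ with compact support, ‖u‖_{L⁶(M)} ≤ 2(2+√2)·A·‖∇u‖_{L²(M)}. -/
open MeasureTheory Metric Real

noncomputable section

abbrev E3 := EuclideanSpace ℝ (Fin 3)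

/-!
A function `u` on the exterior of the unit ball is extended across the unit sphere by the
Hestenes reflection `x ↦ 3 u(x / ‖x‖²) - 2 u(x / ‖x‖³)`: along the sphere the maps `x / ‖x‖²` and
`x / ‖x‖³` are the identity with radial derivatives `-1` and `-2`, and `3 - 2 = 1`,
`3 · (-1) - 2 · (-2) = 1`, so the extension is `C¹`. By the change of variables formula each
reflection increases the `Lᵖ` norm of the gradient at most by the factor `|s| ^ (1 - 1 / p)`, where
`s` is its radial derivative, as long as `p` does not exceed the dimension. It remains to apply the
Sobolev inequality on the whole space to the extension.
-/

open Filter Topology Set Module InnerProductSpace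
open scoped NNReal ENNReal

section Gluing

variable {𝕜 E F : Type*} [NontriviallyNormedField 𝕜] [NormedAddCommGroup E] [NormedSpace 𝕜 E]
  [NormedAddCommGroup F] [NormedSpace 𝕜 F] {s : Set E} [DecidablePred (· ∈ s)]

lemma piecewise_eqOn_closure {α β : Type*} [TopologicalSpace α] {s : Set α}
    [DecidablePred (· ∈ s)] {f g : α → β} (h : EqOn f g (frontier s)) :
    EqOn (s.piecewise f g) f (closure s) := by
  intro x hx
  by_cases hxs : x ∈ s
  · exact piecewise_eq_of_mem s f g hxs
  · rw [piecewise_eq_of_notMem s f g hxs]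
    exact (h ⟨hx, fun hi => hxs (interior_subset hi)⟩).symm

lemma piecewise_eqOn_closure_compl {α β : Type*} [TopologicalSpace α] {s : Set α}
    [DecidablePred (· ∈ s)] {f g : α → β} (h : EqOn f g (frontier s)) :
    EqOn (s.piecewise f g) g (closure sᶜ) := by
  rw [← piecewise_compl]
  exact piecewise_eqOn_closure (by rw [frontier_compl]; exact h.symm)

variable {f g : E → F} {f' g' : E → E →L[𝕜] F}

lemma hasFDerivAt_piecewise (hf : ∀ x, HasFDerivAt f (f' x) x) (hg : ∀ x, HasFDerivAt g (g' x) x)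
    (hfg : EqOn f g (frontier s)) (hfg' : EqOn f' g' (frontier s)) (x : E) :
    HasFDerivAt (s.piecewise f g) (s.piecewise f' g' x) x := by
  have on_closure : HasFDerivWithinAt (s.piecewise f g) (s.piecewise f' g' x) (closure s) x := by
    by_cases hx : x ∈ closure s
    · rw [piecewise_eqOn_closure hfg' hx]
      exact (hf x).hasFDerivWithinAt.congr (piecewise_eqOn_closure hfg)
        (piecewise_eqOn_closure hfg hx)
    · exact .of_notMem_closure (by rwa [closure_closure])
  have on_closure_compl :
      HasFDerivWithinAt (s.piecewise f g) (s.piecewise f' g' x) (closure sᶜ) x := by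
    by_cases hx : x ∈ closure sᶜ
    · rw [piecewise_eqOn_closure_compl hfg' hx]
      exact (hg x).hasFDerivWithinAt.congr (piecewise_eqOn_closure_compl hfg)
        (piecewise_eqOn_closure_compl hfg hx)
    · exact .of_notMem_closure (by rwa [closure_closure])
  have cover : closure s ∪ closure sᶜ = univ := by
    rw [← closure_union, union_compl_self, closure_univ]
  simpa only [cover, hasFDerivWithinAt_univ] using on_closure.union on_closure_compl

lemma fderiv_piecewise (hf : Differentiable 𝕜 f) (hg : Differentiable 𝕜 g)
    (hfg : EqOn f g (frontier s)) (hfg' : EqOn (fderiv 𝕜 f) (fderiv 𝕜 g) (frontier s)) :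
    fderiv 𝕜 (s.piecewise f g) = s.piecewise (fderiv 𝕜 f) (fderiv 𝕜 g) :=
  funext fun x => (hasFDerivAt_piecewise (fun y => (hf y).hasFDerivAt)
    (fun y => (hg y).hasFDerivAt) hfg hfg' x).fderiv

lemma contDiff_one_piecewise (hf : ContDiff 𝕜 1 f) (hg : ContDiff 𝕜 1 g)
    (hfg : EqOn f g (frontier s)) (hfg' : EqOn (fderiv 𝕜 f) (fderiv 𝕜 g) (frontier s)) :
    ContDiff 𝕜 1 (s.piecewise f g) :=
  contDiff_one_iff_hasFDerivAt.2
    ⟨s.piecewise (fderiv 𝕜 f) (fderiv 𝕜 g),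
      (hf.continuous_fderiv one_ne_zero).piecewise hfg' (hg.continuous_fderiv one_ne_zero),
      hasFDerivAt_piecewise (fun x => (hf.differentiable one_ne_zero x).hasFDerivAt)
        (fun x => (hg.differentiable one_ne_zero x).hasFDerivAt) hfg hfg'⟩

end Gluing

section LpNorm

variable {E F : Type*} [NormedAddCommGroup E] [NormedAddCommGroup F]

lemma eLpNorm_le_eLpNorm_restrict_add_compl {α : Type*} {mα : MeasurableSpace α} {μ : Measure α}
    {f : α → E} (hf : AEStronglyMeasurable f μ) {s : Set α} (hs : MeasurableSet s) {p : ℝ≥0∞}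
    (hp : 1 ≤ p) :
    eLpNorm f p μ ≤ eLpNorm f p (μ.restrict s) + eLpNorm f p (μ.restrict sᶜ) := by
  rw [← eLpNorm_indicator_eq_eLpNorm_restrict hs,
    ← eLpNorm_indicator_eq_eLpNorm_restrict hs.compl]
  nth_rewrite 1 [← indicator_self_add_compl s f]
  exact eLpNorm_add_le (hf.indicator hs) (hf.indicator hs.compl) hp

lemma eLpNorm_le_ofReal_mul_eLpNorm_fderiv_iff [NormedSpace ℝ E] [NormedSpace ℝ F]
    [MeasurableSpace E] [OpensMeasurableSpace E] {μ : Measure E} [IsFiniteMeasureOnCompacts μ]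
    {u : E → F} (hu : ContDiff ℝ 1 u) (hu' : HasCompactSupport u) {p q : ℝ≥0} (hp : p ≠ 0)
    (hq : q ≠ 0) {a : ℝ} (ha : 0 ≤ a) :
    eLpNorm u q μ ≤ ENNReal.ofReal a * eLpNorm (fderiv ℝ u) p μ ↔
      (∫ x, ‖u x‖ ^ (q : ℝ) ∂μ) ^ (1 / q : ℝ) ≤
        a * (∫ x, ‖fderiv ℝ u x‖ ^ (p : ℝ) ∂μ) ^ (1 / p : ℝ) := by
  have memLp_u : MemLp u q μ := hu.continuous.memLp_of_hasCompactSupport hu'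
  have memLp_fderiv : MemLp (fderiv ℝ u) p μ :=
    (hu.continuous_fderiv one_ne_zero).memLp_of_hasCompactSupport (hu'.fderiv ℝ)
  rw [memLp_u.eLpNorm_eq_integral_rpow_norm (mod_cast hq) ENNReal.coe_ne_top,
    memLp_fderiv.eLpNorm_eq_integral_rpow_norm (mod_cast hp) ENNReal.coe_ne_top,
    ← ENNReal.ofReal_mul ha, ENNReal.ofReal_le_ofReal_iff (by positivity)]
  simp only [ENNReal.coe_toReal, one_div]

end LpNorm

section RadialPow

variable {E : Type*} [NormedAddCommGroup E] [InnerProductSpace ℝ E] {s t : ℝ} {x e : E}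

/-- The map raising the distance to the origin to the power `s` along each ray. For `s = -1` it is
the inversion in the unit sphere. The origin is sent to itself, also for negative `s`. -/
def radialPow (s : ℝ) (x : E) : E := ‖x‖ ^ (s - 1) • x

/-- The linear map scaling the direction of a unit vector `e` by `s` and fixing the orthogonal
complement of `e`. -/
def radialStretch (s : ℝ) (e : E) : E →L[ℝ] E :=
  ContinuousLinearMap.id ℝ E + (s - 1) • rankOne ℝ e e

lemma norm_radialPow (hs : s ≠ 0) (x : E) : ‖radialPow s x‖ = ‖x‖ ^ s := by
  rw [radialPow, norm_smul, Real.norm_of_nonneg (by positivity)]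
  rcases eq_or_ne x 0 with rfl | hx
  · rw [norm_zero, mul_zero, Real.zero_rpow hs]
  · rw [Real.rpow_sub_one (norm_ne_zero_iff.2 hx), div_mul_cancel₀ _ (norm_ne_zero_iff.2 hx)]

lemma radialPow_one (x : E) : radialPow 1 x = x := by
  rw [radialPow, sub_self, Real.rpow_zero, one_smul]

lemma radialPow_radialPow (s : ℝ) (ht : t ≠ 0) (x : E) :
    radialPow s (radialPow t x) = radialPow (s * t) x := by
  rcases eq_or_ne x 0 with rfl | hx
  · simp only [radialPow, smul_zero]
  · rw [radialPow, norm_radialPow ht, radialPow, radialPow, smul_smul,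
      ← Real.rpow_mul (norm_nonneg x), ← Real.rpow_add (norm_pos_iff.2 hx)]
    ring_nf

lemma radialPow_injective (hs : s ≠ 0) : Function.Injective (radialPow s : E → E) :=
  Function.LeftInverse.injective (g := radialPow s⁻¹) fun x => by
    rw [radialPow_radialPow _ hs, inv_mul_cancel₀ hs, radialPow_one]

lemma radialPow_of_norm_eq_one (s : ℝ) (hx : ‖x‖ = 1) : radialPow s x = x := by
  rw [radialPow, hx, Real.one_rpow, one_smul]

lemma mapsTo_radialPow_ball (hs : s < 0) :
    MapsTo (radialPow s) (ball (0 : E) 1 \ {0}) (ball 0 1)ᶜ := by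
  rintro x ⟨hx, hx₀⟩
  rw [mem_ball_zero_iff] at hx
  rw [mem_compl_iff, mem_ball_zero_iff, not_lt, norm_radialPow hs.ne]
  exact Real.one_le_rpow_of_pos_of_le_one_of_nonpos (norm_pos_iff.2 hx₀) hx.le hs.le

lemma tendsto_radialPow_nhdsNE_zero (hs : s < 0) :
    Tendsto (radialPow s : E → E) (𝓝[≠] 0) (Bornology.cobounded E) := by
  rw [← tendsto_norm_atTop_iff_cobounded]
  simp only [norm_radialPow hs.ne]
  exact (tendsto_rpow_neg_nhdsGT_zero hs).comp tendsto_norm_nhdsNE_zero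

lemma contDiffAt_radialPow (s : ℝ) (hx : x ≠ 0) {n : WithTop ℕ∞} :
    ContDiffAt ℝ n (radialPow s) x :=
  ((contDiffAt_norm ℝ hx).rpow_const_of_ne (norm_ne_zero_iff.2 hx)).smul contDiffAt_id

lemma hasFDerivAt_norm_rpow_of_ne_zero (r : ℝ) (hx : x ≠ 0) :
    HasFDerivAt (fun y : E => ‖y‖ ^ r) ((r * ‖x‖ ^ (r - 2)) • innerSL ℝ x) x := by
  have h := (hasStrictFDerivAt_norm_sq x).hasFDerivAt.rpow_const (p := r / 2)
    (Or.inl (by simpa using hx))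
  simp only [← Real.rpow_natCast_mul (norm_nonneg _), ← Nat.cast_smul_eq_nsmul ℝ, smul_smul] at h
  convert! h using 2 <;> ring_nf

lemma hasFDerivAt_radialPow (s : ℝ) (hx : x ≠ 0) :
    HasFDerivAt (radialPow s) (‖x‖ ^ (s - 1) • radialStretch s (‖x‖⁻¹ • x)) x := by
  refine ((hasFDerivAt_norm_rpow_of_ne_zero (s - 1) hx).smul (hasFDerivAt_id x)).congr_fderiv ?_
  have hpow : ‖x‖ ^ (s - 1 - 2) = ‖x‖ ^ (s - 1) * (‖x‖⁻¹ * ‖x‖⁻¹) := by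
    rw [Real.rpow_sub (norm_pos_iff.2 hx), Real.rpow_two, div_eq_mul_inv, sq, mul_inv]
  ext y
  simp only [radialStretch, hpow, id_eq, add_apply, smul_apply, smul_add, smul_eq_mul,
    ContinuousLinearMap.id_apply, ContinuousLinearMap.smulRight_apply, coe_innerSL_apply,
    rankOne_apply, map_smul]
  module

lemma norm_radialStretch_le (hs : 1 ≤ |s|) (he : ‖e‖ = 1) : ‖radialStretch s e‖ ≤ |s| := by
  refine ContinuousLinearMap.opNorm_le_bound _ (abs_nonneg s) fun y => ?_
  have expand : ‖radialStretch s e y‖ ^ 2 = ‖y‖ ^ 2 + (s ^ 2 - 1) * inner ℝ e y ^ 2 := by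
    simp only [radialStretch, add_apply, ContinuousLinearMap.id_apply,
      smul_apply, rankOne_apply, norm_add_sq_real, norm_smul, he,
      inner_smul_right, real_inner_comm e y, Real.norm_eq_abs, mul_one, mul_pow, sq_abs]
    ring
  have cauchy_schwarz : inner ℝ e y ^ 2 ≤ ‖y‖ ^ 2 := by
    simpa [he] using sq_le_sq.2 ((abs_real_inner_le_norm e y).trans (le_abs_self _))
  have hs' : 1 ≤ s ^ 2 := (one_le_sq_iff_one_le_abs s).2 hs
  refine le_of_sq_le_sq ?_ (by positivity)
  rw [expand, mul_pow, sq_abs]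
  nlinarith

lemma det_radialStretch [FiniteDimensional ℝ E] (s : ℝ) (he : ‖e‖ = 1) :
    (radialStretch s e).det = s := by
  have h : (radialStretch s e : E →ₗ[ℝ] E) =
      LinearMap.transvection ((s - 1) • innerₛₗ ℝ e) e := by
    ext y
    simp [radialStretch, LinearMap.transvection, smul_smul]
  rw [ContinuousLinearMap.det, h, LinearMap.transvection.det]
  simp [he]

end RadialPow

section Reflection

variable {E F : Type*} [NormedAddCommGroup E] [InnerProductSpace ℝ E] [NormedAddCommGroup F]
  {s : ℝ} {x : E} {u : E → F}

/-- The pullback of `u` by `radialPow s`, with the value at the origin set to `0` so that the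
pullback of a compactly supported function is smooth there when `s < 0`. -/
def radialPullback (s : ℝ) (u : E → F) : E → F := indicator {0}ᶜ (u ∘ radialPow s)

lemma radialPullback_eventuallyEq (s : ℝ) (u : E → F) (hx : x ≠ 0) :
    radialPullback s u =ᶠ[𝓝 x] u ∘ radialPow s :=
  eqOn_indicator.eventuallyEq_of_mem (isOpen_ne.mem_nhds hx)

lemma radialPullback_of_norm_eq_one (s : ℝ) (u : E → F) (hx : ‖x‖ = 1) :
    radialPullback s u x = u x := by
  have hx₀ : x ≠ 0 := norm_ne_zero_iff.1 (hx ▸ one_ne_zero)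
  rw [(radialPullback_eventuallyEq s u hx₀).eq_of_nhds, Function.comp_apply,
    radialPow_of_norm_eq_one s hx]

lemma radialPullback_eventuallyEq_zero [FiniteDimensional ℝ E] (hs : s < 0)
    (hu : HasCompactSupport u) :
    radialPullback s u =ᶠ[𝓝 0] 0 := by
  have far : ∀ᶠ y in Bornology.cobounded E, u y = 0 := by
    rw [Metric.cobounded_eq_cocompact, ← coclosedCompact_eq_cocompact]
    exact hasCompactSupport_iff_eventuallyEq.1 hu
  have near := eventually_nhdsWithin_iff.1 ((tendsto_radialPow_nhdsNE_zero hs).eventually far)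
  filter_upwards [near] with x hx
  exact indicator_apply_eq_zero.2 hx

variable [NormedSpace ℝ F]

lemma fderiv_radialPullback (s : ℝ) (hu : Differentiable ℝ u) (hx : x ≠ 0) :
    fderiv ℝ (radialPullback s u) x =
      fderiv ℝ u (radialPow s x) ∘L (‖x‖ ^ (s - 1) • radialStretch s (‖x‖⁻¹ • x)) := by
  rw [(radialPullback_eventuallyEq s u hx).fderiv_eq]
  exact ((hu _).hasFDerivAt.comp x (hasFDerivAt_radialPow s hx)).fderiv

lemma fderiv_radialPullback_of_norm_eq_one (s : ℝ) (hu : Differentiable ℝ u) (hx : ‖x‖ = 1) :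
    fderiv ℝ (radialPullback s u) x = fderiv ℝ u x ∘L radialStretch s x := by
  rw [fderiv_radialPullback s hu (norm_ne_zero_iff.1 (hx ▸ one_ne_zero)),
    radialPow_of_norm_eq_one s hx, hx, Real.one_rpow, inv_one, one_smul, one_smul]

lemma norm_fderiv_radialPullback_le (hs : 1 ≤ |s|) (hu : Differentiable ℝ u) (hx : x ≠ 0) :
    ‖fderiv ℝ (radialPullback s u) x‖ ≤
      |s| * ‖x‖ ^ (s - 1) * ‖fderiv ℝ u (radialPow s x)‖ := by
  rw [fderiv_radialPullback s hu hx]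
  calc _ ≤ ‖fderiv ℝ u (radialPow s x)‖ * ‖‖x‖ ^ (s - 1) • radialStretch s (‖x‖⁻¹ • x)‖ :=
        ContinuousLinearMap.opNorm_comp_le _ _
    _ = ‖fderiv ℝ u (radialPow s x)‖ * (‖x‖ ^ (s - 1) * ‖radialStretch s (‖x‖⁻¹ • x)‖) := by
        rw [norm_smul, Real.norm_of_nonneg (by positivity)]
    _ ≤ ‖fderiv ℝ u (radialPow s x)‖ * (‖x‖ ^ (s - 1) * |s|) := by
        gcongr
        exact norm_radialStretch_le hs (norm_smul_inv_norm hx)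
    _ = |s| * ‖x‖ ^ (s - 1) * ‖fderiv ℝ u (radialPow s x)‖ := by ring

lemma enorm_fderiv_radialPullback_rpow_le (hs : s ≤ -1) (hu : Differentiable ℝ u) {p : ℝ}
    (hp₀ : 0 ≤ p) (hp : p ≤ finrank ℝ E) (hx : x ∈ ball (0 : E) 1 \ {0}) :
    ‖fderiv ℝ (radialPullback s u) x‖ₑ ^ p ≤ ‖s‖ₑ ^ (p - 1) *
      (ENNReal.ofReal (|s| * ‖x‖ ^ ((s - 1) * finrank ℝ E)) *
        ‖fderiv ℝ u (radialPow s x)‖ₑ ^ p) := by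
  have abs_s : 1 ≤ |s| := by rw [abs_of_neg (by linarith)]; linarith
  have norm_pos : 0 < ‖x‖ := norm_pos_iff.2 hx.2
  have norm_le_one : ‖x‖ ≤ 1 := (mem_ball_zero_iff.1 hx.1).le
  have real_bound : ‖fderiv ℝ (radialPullback s u) x‖ ^ p ≤ |s| ^ (p - 1) *
      (|s| * ‖x‖ ^ ((s - 1) * finrank ℝ E) * ‖fderiv ℝ u (radialPow s x)‖ ^ p) :=
    calc ‖fderiv ℝ (radialPullback s u) x‖ ^ p
      _ ≤ (|s| * ‖x‖ ^ (s - 1) * ‖fderiv ℝ u (radialPow s x)‖) ^ p := by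
          gcongr
          exact norm_fderiv_radialPullback_le abs_s hu hx.2
      _ = |s| ^ p * ‖x‖ ^ ((s - 1) * p) * ‖fderiv ℝ u (radialPow s x)‖ ^ p := by
          rw [Real.mul_rpow (by positivity) (by positivity),
            Real.mul_rpow (by positivity) (by positivity), ← Real.rpow_mul norm_pos.le]
      _ ≤ |s| ^ p * ‖x‖ ^ ((s - 1) * finrank ℝ E) * ‖fderiv ℝ u (radialPow s x)‖ ^ p := by
          gcongr ?_ * ?_ * _
          exact Real.rpow_le_rpow_of_exponent_ge norm_pos norm_le_one
            (mul_le_mul_of_nonpos_left hp (by linarith))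
      _ = _ := by
          rw [Real.rpow_sub_one (by positivity)]
          field_simp
  simpa only [← ofReal_norm, ENNReal.ofReal_rpow_of_nonneg (norm_nonneg _) hp₀, Real.norm_eq_abs,
    ENNReal.ofReal_rpow_of_pos (zero_lt_one.trans_le abs_s),
    ← ENNReal.ofReal_mul (show 0 ≤ |s| * ‖x‖ ^ ((s - 1) * finrank ℝ E) by positivity),
    ← ENNReal.ofReal_mul (show 0 ≤ |s| ^ (p - 1) by positivity)]
    using ENNReal.ofReal_le_ofReal real_bound

variable [FiniteDimensional ℝ E]

lemma contDiff_radialPullback (hs : s < 0) {n : WithTop ℕ∞} (hu : ContDiff ℝ n u)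
    (hu' : HasCompactSupport u) : ContDiff ℝ n (radialPullback s u) := by
  rw [contDiff_iff_contDiffAt]
  intro x
  rcases eq_or_ne x 0 with rfl | hx
  · exact contDiffAt_const.congr_of_eventuallyEq (radialPullback_eventuallyEq_zero hs hu')
  · exact (hu.contDiffAt.comp x (contDiffAt_radialPow s hx)).congr_of_eventuallyEq
      (radialPullback_eventuallyEq s u hx)

variable [MeasurableSpace E] [BorelSpace E] (μ : Measure E) [μ.IsAddHaarMeasure]

lemma setLIntegral_comp_radialPow_le (hs : s < 0) (g : E → ℝ≥0∞) :
    ∫⁻ x in ball 0 1 \ {0},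
        ENNReal.ofReal (|s| * ‖x‖ ^ ((s - 1) * finrank ℝ E)) * g (radialPow s x) ∂μ ≤
      ∫⁻ x in (ball 0 1)ᶜ, g x ∂μ := by
  have abs_det : ∀ x ∈ ball (0 : E) 1 \ {0},
      |(‖x‖ ^ (s - 1) • radialStretch s (‖x‖⁻¹ • x)).det| =
        |s| * ‖x‖ ^ ((s - 1) * finrank ℝ E) := fun x hx => by
    have unit : ‖‖x‖⁻¹ • x‖ = 1 := norm_smul_inv_norm (𝕜 := ℝ) hx.2
    rw [ContinuousLinearMap.det, ContinuousLinearMap.toLinearMap_smul, LinearMap.det_smul,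
      ← ContinuousLinearMap.det, det_radialStretch s unit, abs_mul,
      Real.rpow_mul_natCast (norm_nonneg x), abs_of_nonneg (by positivity), mul_comm]
  have measurable_punctured_ball : MeasurableSet (ball (0 : E) 1 \ {0}) :=
    measurableSet_ball.diff (measurableSet_singleton 0)
  calc _ = ∫⁻ x in radialPow s '' (ball 0 1 \ {0}), g x ∂μ := by
        rw [lintegral_image_eq_lintegral_abs_det_fderiv_mul μ measurable_punctured_ball
          (fun x hx => (hasFDerivAt_radialPow s hx.2).hasFDerivWithinAt)
          (radialPow_injective hs.ne).injOn]
        exact setLIntegral_congr_fun measurable_punctured_ball fun x hx => by rw [abs_det x hx]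
    _ ≤ ∫⁻ x in (ball 0 1)ᶜ, g x ∂μ := lintegral_mono_set (mapsTo_radialPow_ball hs).image_subset

lemma eLpNorm_fderiv_radialPullback_le (hs : s ≤ -1) (hu : Differentiable ℝ u) {p : ℝ≥0}
    (hp₀ : 0 < p) (hp : p ≤ finrank ℝ E) :
    eLpNorm (fderiv ℝ (radialPullback s u)) p (μ.restrict (ball 0 1)) ≤
      ‖s‖ₑ ^ (1 - 1 / p : ℝ) * eLpNorm (fderiv ℝ u) p (μ.restrict (ball 0 1)ᶜ) := by
  have hp' : (p : ℝ) ≤ finrank ℝ E := mod_cast hp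
  have : Nontrivial E := nontrivial_of_finrank_pos (R := ℝ) (mod_cast hp₀.trans_le hp)
  have energy_le : ∫⁻ x in ball 0 1, ‖fderiv ℝ (radialPullback s u) x‖ₑ ^ (p : ℝ) ∂μ ≤
      ‖s‖ₑ ^ (p - 1 : ℝ) * ∫⁻ x in (ball 0 1)ᶜ, ‖fderiv ℝ u x‖ₑ ^ (p : ℝ) ∂μ :=
    calc _ = ∫⁻ x in ball 0 1 \ {0}, ‖fderiv ℝ (radialPullback s u) x‖ₑ ^ (p : ℝ) ∂μ :=
          (setLIntegral_congr (sdiff_null_ae_eq_self (measure_singleton 0))).symm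
      _ ≤ ∫⁻ x in ball 0 1 \ {0}, ‖s‖ₑ ^ (p - 1 : ℝ) *
            (ENNReal.ofReal (|s| * ‖x‖ ^ ((s - 1) * finrank ℝ E)) *
              ‖fderiv ℝ u (radialPow s x)‖ₑ ^ (p : ℝ)) ∂μ :=
          setLIntegral_mono' (measurableSet_ball.diff (measurableSet_singleton 0)) fun x hx =>
            enorm_fderiv_radialPullback_rpow_le hs hu p.coe_nonneg hp' hx
      _ = ‖s‖ₑ ^ (p - 1 : ℝ) * ∫⁻ x in ball 0 1 \ {0},
            ENNReal.ofReal (|s| * ‖x‖ ^ ((s - 1) * finrank ℝ E)) *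
              ‖fderiv ℝ u (radialPow s x)‖ₑ ^ (p : ℝ) ∂μ :=
          lintegral_const_mul' _ _ (ENNReal.rpow_ne_top_of_ne_zero
            (enorm_ne_zero.2 (by linarith)) enorm_ne_top)
      _ ≤ _ := mul_le_mul_right (setLIntegral_comp_radialPow_le μ (by linarith)
          fun y => ‖fderiv ℝ u y‖ₑ ^ (p : ℝ)) _
  rw [eLpNorm_nnreal_eq_lintegral hp₀.ne', eLpNorm_nnreal_eq_lintegral hp₀.ne']
  calc _ ≤ _ := ENNReal.rpow_le_rpow energy_le (by positivity)
    _ = _ := by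
      rw [ENNReal.mul_rpow_of_nonneg _ _ (by positivity), ← ENNReal.rpow_mul]
      congr 2
      field_simp

end Reflection

section Extension

variable {E F : Type*} [NormedAddCommGroup E] [InnerProductSpace ℝ E] [NormedAddCommGroup F]
  [NormedSpace ℝ F] {u : E → F}

/-- The part inside the unit ball of the Hestenes extension of `u`. -/
def hestenesReflection (u : E → F) : E → F :=
  (3 : ℝ) • radialPullback (-1) u - (2 : ℝ) • radialPullback (-2) u

open scoped Classical in
/-- The Hestenes extension across the unit sphere of the restriction of `u` to the exterior of the
unit ball. -/
def hestenesExtension (u : E → F) : E → F := (ball 0 1).piecewise (hestenesReflection u) u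

lemma hestenesReflection_eqOn_sphere (u : E → F) :
    EqOn (hestenesReflection u) u (frontier (ball 0 1)) := fun x hx => by
  have hx' : ‖x‖ = 1 := mem_sphere_zero_iff_norm.1 (frontier_ball_subset_sphere hx)
  simp only [hestenesReflection, Pi.sub_apply, Pi.smul_apply, radialPullback_of_norm_eq_one _ u hx']
  module

lemma hestenesExtension_eqOn_compl_ball (u : E → F) :
    EqOn (hestenesExtension u) u (ball 0 1)ᶜ := by
  classical
  exact piecewise_eqOn_compl _ _ _

variable [FiniteDimensional ℝ E]

lemma contDiff_hestenesReflection {n : WithTop ℕ∞} (hu : ContDiff ℝ n u)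
    (hu' : HasCompactSupport u) : ContDiff ℝ n (hestenesReflection u) :=
  ((contDiff_radialPullback (by norm_num) hu hu').const_smul 3).sub
    ((contDiff_radialPullback (by norm_num) hu hu').const_smul 2)

lemma fderiv_hestenesReflection (hu : ContDiff ℝ 1 u) (hu' : HasCompactSupport u) :
    fderiv ℝ (hestenesReflection u) =
      (3 : ℝ) • fderiv ℝ (radialPullback (-1) u) - (2 : ℝ) • fderiv ℝ (radialPullback (-2) u) := by
  have diff {s : ℝ} (hs : s < 0) : Differentiable ℝ (radialPullback s u) :=
    (contDiff_radialPullback hs hu hu').differentiable one_ne_zero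
  funext x
  rw [hestenesReflection, fderiv_sub ((diff (by norm_num) x).const_smul 3)
    ((diff (by norm_num) x).const_smul 2), fderiv_const_smul (diff (by norm_num) x),
    fderiv_const_smul (diff (by norm_num) x)]
  rfl

lemma fderiv_hestenesReflection_eqOn_sphere (hu : ContDiff ℝ 1 u) (hu' : HasCompactSupport u) :
    EqOn (fderiv ℝ (hestenesReflection u)) (fderiv ℝ u) (frontier (ball 0 1)) := fun x hx => by
  have hx' : ‖x‖ = 1 := mem_sphere_zero_iff_norm.1 (frontier_ball_subset_sphere hx)
  have hdiff := hu.differentiable one_ne_zero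
  have stretch : (3 : ℝ) • radialStretch (-1) x - (2 : ℝ) • radialStretch (-2) x =
      ContinuousLinearMap.id ℝ E := by
    simp only [radialStretch]
    module
  rw [fderiv_hestenesReflection hu hu', Pi.sub_apply, Pi.smul_apply, Pi.smul_apply,
    fderiv_radialPullback_of_norm_eq_one _ hdiff hx',
    fderiv_radialPullback_of_norm_eq_one _ hdiff hx', ← ContinuousLinearMap.comp_smul,
    ← ContinuousLinearMap.comp_smul, ← ContinuousLinearMap.comp_sub, stretch,
    ContinuousLinearMap.comp_id]

lemma contDiff_hestenesExtension (hu : ContDiff ℝ 1 u) (hu' : HasCompactSupport u) :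
    ContDiff ℝ 1 (hestenesExtension u) := by
  classical
  exact contDiff_one_piecewise (contDiff_hestenesReflection hu hu') hu
    (hestenesReflection_eqOn_sphere u) (fderiv_hestenesReflection_eqOn_sphere hu hu')

open scoped Classical in
lemma fderiv_hestenesExtension (hu : ContDiff ℝ 1 u) (hu' : HasCompactSupport u) :
    fderiv ℝ (hestenesExtension u) =
      (ball 0 1).piecewise (fderiv ℝ (hestenesReflection u)) (fderiv ℝ u) :=
  fderiv_piecewise ((contDiff_hestenesReflection hu hu').differentiable one_ne_zero)
    (hu.differentiable one_ne_zero) (hestenesReflection_eqOn_sphere u)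
    (fderiv_hestenesReflection_eqOn_sphere hu hu')

lemma hasCompactSupport_hestenesExtension (hu : HasCompactSupport u) :
    HasCompactSupport (hestenesExtension u) := by
  refine .intro ((isCompact_closedBall (0 : E) 1).union hu) fun x hx => ?_
  rw [mem_union, not_or] at hx
  rw [hestenesExtension_eqOn_compl_ball u fun h => hx.1 (ball_subset_closedBall h)]
  exact image_eq_zero_of_notMem_tsupport hx.2

variable [MeasurableSpace E] [BorelSpace E] (μ : Measure E) [μ.IsAddHaarMeasure] {p : ℝ≥0}

lemma eLpNorm_fderiv_hestenesReflection_le (hu : ContDiff ℝ 1 u) (hu' : HasCompactSupport u)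
    (hp₁ : 1 ≤ p) (hp : p ≤ finrank ℝ E) :
    eLpNorm (fderiv ℝ (hestenesReflection u)) p (μ.restrict (ball 0 1)) ≤
      (3 + 2 * 2 ^ (1 - 1 / p : ℝ)) * eLpNorm (fderiv ℝ u) p (μ.restrict (ball 0 1)ᶜ) := by
  set ν := μ.restrict (ball (0 : E) 1)
  set N := eLpNorm (fderiv ℝ u) p (μ.restrict (ball 0 1)ᶜ)
  have meas {s : ℝ} (hs : s < 0) :
      AEStronglyMeasurable (fderiv ℝ (radialPullback s u)) ν :=
    ((contDiff_radialPullback hs hu hu').continuous_fderiv one_ne_zero).aestronglyMeasurable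
  have pullback_le {s : ℝ} (hs : s ≤ -1) :
      eLpNorm (fderiv ℝ (radialPullback s u)) p ν ≤ ‖s‖ₑ ^ (1 - 1 / p : ℝ) * N :=
    eLpNorm_fderiv_radialPullback_le μ hs (hu.differentiable one_ne_zero)
      (zero_lt_one.trans_le hp₁) hp
  have scale (c s : ℝ) : eLpNorm (c • fderiv ℝ (radialPullback s u)) p ν =
      ‖c‖ₑ * eLpNorm (fderiv ℝ (radialPullback s u)) p ν :=
    eLpNorm_const_smul c (fderiv ℝ (radialPullback s u)) p ν
  have enorm_two : ‖(2 : ℝ)‖ₑ = 2 := Real.enorm_natCast 2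
  have enorm_three : ‖(3 : ℝ)‖ₑ = 3 := Real.enorm_natCast 3
  rw [fderiv_hestenesReflection hu hu']
  calc _ ≤ eLpNorm ((3 : ℝ) • fderiv ℝ (radialPullback (-1) u)) p ν +
        eLpNorm ((2 : ℝ) • fderiv ℝ (radialPullback (-2) u)) p ν :=
        eLpNorm_sub_le ((meas (by norm_num)).const_smul 3) ((meas (by norm_num)).const_smul 2)
          (mod_cast hp₁)
    _ = 3 * eLpNorm (fderiv ℝ (radialPullback (-1) u)) p ν +
        2 * eLpNorm (fderiv ℝ (radialPullback (-2) u)) p ν := by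
        rw [scale, scale, enorm_two, enorm_three]
    _ ≤ 3 * (‖(-1 : ℝ)‖ₑ ^ (1 - 1 / p : ℝ) * N) + 2 * (‖(-2 : ℝ)‖ₑ ^ (1 - 1 / p : ℝ) * N) := by
        gcongr <;> exact pullback_le (by norm_num)
    _ = (3 + 2 * 2 ^ (1 - 1 / p : ℝ)) * N := by
        rw [enorm_neg, enorm_neg, enorm_one, enorm_two, ENNReal.one_rpow]
        ring

lemma eLpNorm_fderiv_hestenesExtension_le (hu : ContDiff ℝ 1 u) (hu' : HasCompactSupport u)
    (hp₁ : 1 ≤ p) (hp : p ≤ finrank ℝ E) :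
    eLpNorm (fderiv ℝ (hestenesExtension u)) p μ ≤
      (4 + 2 * 2 ^ (1 - 1 / p : ℝ)) * eLpNorm (fderiv ℝ u) p (μ.restrict (ball 0 1)ᶜ) := by
  classical
  have inside : fderiv ℝ (hestenesExtension u) =ᵐ[μ.restrict (ball 0 1)]
      fderiv ℝ (hestenesReflection u) := by
    rw [fderiv_hestenesExtension hu hu']
    exact piecewise_ae_eq_restrict measurableSet_ball
  have outside : fderiv ℝ (hestenesExtension u) =ᵐ[μ.restrict (ball 0 1)ᶜ] fderiv ℝ u := by
    rw [fderiv_hestenesExtension hu hu']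
    exact piecewise_ae_eq_restrict_compl measurableSet_ball
  calc _ ≤ eLpNorm (fderiv ℝ (hestenesExtension u)) p (μ.restrict (ball 0 1)) +
        eLpNorm (fderiv ℝ (hestenesExtension u)) p (μ.restrict (ball 0 1)ᶜ) :=
        eLpNorm_le_eLpNorm_restrict_add_compl ((contDiff_hestenesExtension hu hu').continuous_fderiv
          one_ne_zero).aestronglyMeasurable measurableSet_ball (mod_cast hp₁)
    _ = eLpNorm (fderiv ℝ (hestenesReflection u)) p (μ.restrict (ball 0 1)) +
        eLpNorm (fderiv ℝ u) p (μ.restrict (ball 0 1)ᶜ) := by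
        rw [eLpNorm_congr_ae inside, eLpNorm_congr_ae outside]
    _ ≤ (3 + 2 * 2 ^ (1 - 1 / p : ℝ)) * eLpNorm (fderiv ℝ u) p (μ.restrict (ball 0 1)ᶜ) +
        eLpNorm (fderiv ℝ u) p (μ.restrict (ball 0 1)ᶜ) := by
        gcongr
        exact eLpNorm_fderiv_hestenesReflection_le μ hu hu' hp₁ hp
    _ = _ := by ring

theorem eLpNorm_restrict_compl_ball_le_of_sobolev (hp₁ : 1 ≤ p) (hp : p ≤ finrank ℝ E) {q A : ℝ≥0∞}
    (hSob : ∀ v : E → F, ContDiff ℝ 1 v → HasCompactSupport v →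
      eLpNorm v q μ ≤ A * eLpNorm (fderiv ℝ v) p μ)
    (hu : ContDiff ℝ 1 u) (hu' : HasCompactSupport u) :
    eLpNorm u q (μ.restrict (ball 0 1)ᶜ) ≤
      (4 + 2 * 2 ^ (1 - 1 / p : ℝ)) * A * eLpNorm (fderiv ℝ u) p (μ.restrict (ball 0 1)ᶜ) :=
  calc eLpNorm u q (μ.restrict (ball 0 1)ᶜ)
    _ = eLpNorm (hestenesExtension u) q (μ.restrict (ball 0 1)ᶜ) :=
        eLpNorm_congr_ae ((hestenesExtension_eqOn_compl_ball u).symm.aeEq_restrict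
          measurableSet_ball.compl)
    _ ≤ eLpNorm (hestenesExtension u) q μ := eLpNorm_restrict_le _ _ _ _
    _ ≤ A * eLpNorm (fderiv ℝ (hestenesExtension u)) p μ :=
        hSob _ (contDiff_hestenesExtension hu hu') (hasCompactSupport_hestenesExtension hu')
    _ ≤ A * ((4 + 2 * 2 ^ (1 - 1 / p : ℝ)) *
          eLpNorm (fderiv ℝ u) p (μ.restrict (ball 0 1)ᶜ)) := by
        gcongr
        exact eLpNorm_fderiv_hestenesExtension_le μ hu hu' hp₁ hp
    _ = _ := by ring

theorem exterior_sobolev_inequality_general (hp₁ : 1 ≤ p) (hp : p ≤ finrank ℝ E) {q : ℝ≥0}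
    (hq : q ≠ 0) {A : ℝ} (hA : 0 ≤ A)
    (hSob : ∀ v : E → F, ContDiff ℝ 1 v → HasCompactSupport v →
      (∫ x, ‖v x‖ ^ (q : ℝ) ∂μ) ^ (1 / q : ℝ) ≤
        A * (∫ x, ‖fderiv ℝ v x‖ ^ (p : ℝ) ∂μ) ^ (1 / p : ℝ))
    (hu : ContDiff ℝ 1 u) (hu' : HasCompactSupport u) :
    (∫ x in (ball 0 1)ᶜ, ‖u x‖ ^ (q : ℝ) ∂μ) ^ (1 / q : ℝ) ≤
      (4 + 2 * 2 ^ (1 - 1 / p : ℝ)) * A *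
        (∫ x in (ball 0 1)ᶜ, ‖fderiv ℝ u x‖ ^ (p : ℝ) ∂μ) ^ (1 / p : ℝ) := by
  have hp₀ : p ≠ 0 := (zero_lt_one.trans_le hp₁).ne'
  have constant : ENNReal.ofReal ((4 + 2 * 2 ^ (1 - 1 / p : ℝ)) * A) =
      (4 + 2 * 2 ^ (1 - 1 / p : ℝ)) * ENNReal.ofReal A := by
    rw [ENNReal.ofReal_mul (by positivity), ENNReal.ofReal_add zero_le_four (by positivity),
      ENNReal.ofReal_mul zero_le_two, ← ENNReal.ofReal_rpow_of_pos two_pos, ENNReal.ofReal_ofNat,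
      ENNReal.ofReal_ofNat]
  rw [← eLpNorm_le_ofReal_mul_eLpNorm_fderiv_iff hu hu' hp₀ hq (by positivity), constant]
  exact eLpNorm_restrict_compl_ball_le_of_sobolev μ hp₁ hp
    (fun v hv hv' => (eLpNorm_le_ofReal_mul_eLpNorm_fderiv_iff hv hv' hp₀ hq hA).2 (hSob v hv hv'))
    hu hu'

end Extension

/-- **Exterior Sobolev inequality** (Appendix, Theorem 5.2):
If `A > 0` is a Sobolev constant for `ℝ³`, i.e. `‖v‖_{L⁶(ℝ³)} ≤ A ‖∇v‖_{L²(ℝ³)}` for all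
`C¹` compactly supported `v`, then on `M = ℝ³ \ B(0,1)` one has
`‖u‖_{L⁶(M)} ≤ 2(2+√2) A ‖∇u‖_{L²(M)}` for every `C¹` compactly supported `u`. -/
theorem exterior_sobolev_inequality
    (A : ℝ) (hA : 0 < A)
    (hSob : ∀ v : E3 → ℝ, ContDiff ℝ 1 v → HasCompactSupport v →
      (∫ x, |v x| ^ (6 : ℝ)) ^ ((1 : ℝ) / 6) ≤
        A * (∫ x, ‖fderiv ℝ v x‖ ^ (2 : ℝ)) ^ ((1 : ℝ) / 2))
    (u : E3 → ℝ) (hu : ContDiff ℝ 1 u) (husupp : HasCompactSupport u) :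
    (∫ x in (ball (0 : E3) 1)ᶜ, |u x| ^ (6 : ℝ)) ^ ((1 : ℝ) / 6) ≤
      2 * (2 + Real.sqrt 2) * A *
        (∫ x in (ball (0 : E3) 1)ᶜ, ‖fderiv ℝ u x‖ ^ (2 : ℝ)) ^ ((1 : ℝ) / 2) := by
  have constant : 2 * (2 + √2) = 4 + 2 * 2 ^ (1 - 1 / (2 : ℝ≥0) : ℝ) := by
    norm_num [Real.sqrt_eq_rpow, mul_add]
  rw [constant]
  exact exterior_sobolev_inequality_general volume (p := 2) (q := 6) one_le_two (by norm_num)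
    (by norm_num) hA.le hSob hu husupp
end
end

section
/- Let ξ : ℝ³ → ℝ be twice continuously differentiable with ξ(x) > 0 for all x, and suppose ξ − 1 has compact support. Let R' : ℝ³ → ℝ be continuous with R'(x) ≥ 0 for all x. If ξ satisfies Δξ = (1/8)·R'·(ξ − ξ^{−7}) on ℝ³, where Δ is the Euclidean Laplacian, then ξ ≡ 1. -/
open MeasureTheory Real

noncomputable section

/-- The Euclidean Laplacian of `ξ : ℝ³ → ℝ`: `Δξ = ∂₁²ξ + ∂₂²ξ + ∂₃²ξ`. -/
def laplacian (ξ : E3 → ℝ) (x : E3) : ℝ :=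
  ∑ i : Fin 3,
    fderiv ℝ (fun y => fderiv ℝ ξ y (EuclideanSpace.single i (1 : ℝ))) x
      (EuclideanSpace.single i (1 : ℝ))

/-!
Put `u = ξ - 1`. Since `t - t ^ p` has the sign of `t - 1` whenever `t > 0` and `p ≤ 1`, the
equation gives `u Δu ≥ 0`, whereas Green's identity gives `∫ u Δu = -∫ ‖∇u‖² ≤ 0`. Hence `∇u = 0`,
and the constant `u` vanishes because its support is compact. Testing the equation against `ξ - 1`
in place of the paper's `ξ - ξ⁻⁷` avoids differentiating the nonlinearity.
-/

open scoped Gradient Laplacian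

section Laplacian

variable {E F : Type*} [NormedAddCommGroup E] [InnerProductSpace ℝ E] [FiniteDimensional ℝ E]
  [NormedAddCommGroup F] [NormedSpace ℝ F]

theorem laplacian_eq_sum_fderiv_fderiv {ι : Type*} [Fintype ι] (b : OrthonormalBasis ι ℝ E)
    {f : E → F} {x : E} (hf : DifferentiableAt ℝ (fderiv ℝ f) x) :
    Δ f x = ∑ i, fderiv ℝ (fun y ↦ fderiv ℝ f y (b i)) x (b i) := by
  rw [InnerProductSpace.laplacian_eq_iteratedFDeriv_orthonormalBasis f b]
  simp [iteratedFDeriv_two_apply, fderiv_clm_apply hf (differentiableAt_const _)]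

theorem laplacian_sub_const {f : E → F} {x : E} (hf : ContDiffAt ℝ 2 f x) (c : F) :
    Δ (fun y ↦ f y - c) x = Δ f x := by
  simpa using! hf.laplacian_sub (contDiffAt_const (c := c))

end Laplacian

theorem laplacian_eq_innerProductSpace_laplacian {ξ : E3 → ℝ} {x : E3}
    (hξ : DifferentiableAt ℝ (fderiv ℝ ξ) x) : laplacian ξ x = Δ ξ x := by
  simp [laplacian_eq_sum_fderiv_fderiv (EuclideanSpace.basisFun (Fin 3) ℝ) hξ, laplacian]

section Gradient

variable {E : Type*} [NormedAddCommGroup E] [InnerProductSpace ℝ E] [CompleteSpace E] {f : E → ℝ}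

theorem continuous_gradient_of_contDiff (hf : ContDiff ℝ 1 f) : Continuous (∇ f) :=
  (InnerProductSpace.toDual ℝ E).symm.continuous.comp (hf.continuous_fderiv one_ne_zero)

theorem hasCompactSupport_gradient (hf : HasCompactSupport f) : HasCompactSupport (∇ f) :=
  (hf.fderiv (𝕜 := ℝ)).comp_left (map_zero (InnerProductSpace.toDual ℝ E).symm)

theorem sum_fderiv_mul_fderiv_eq_inner_gradient {ι : Type*} [Fintype ι]
    (b : OrthonormalBasis ι ℝ E) (f g : E → ℝ) (x : E) :
    ∑ i, fderiv ℝ f x (b i) * fderiv ℝ g x (b i) = inner ℝ (∇ f x) (∇ g x) := by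
  simp [← b.sum_inner_mul_inner (∇ f x) (∇ g x), inner_gradient_left, inner_gradient_right]

end Gradient

section Integral

theorem integrable_mul_fderiv_apply_of_hasCompactSupport {E 𝕜 : Type*} [NormedAddCommGroup E]
    [NormedSpace ℝ E] [MeasurableSpace E] [OpensMeasurableSpace E] {μ : Measure E}
    [IsFiniteMeasureOnCompacts μ] [NormedField 𝕜] [NormedAlgebra ℝ 𝕜] {f g : E → 𝕜}
    (hf : Continuous f) (hg : ContDiff ℝ 1 g) (hfs : HasCompactSupport f) (v : E) :
    Integrable (fun x ↦ f x * fderiv ℝ g x v) μ :=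
  (hf.mul ((hg.continuous_fderiv one_ne_zero).clm_apply
    continuous_const)).integrable_of_hasCompactSupport hfs.mul_right

theorem integral_mul_fderiv_eq_neg_fderiv_mul_of_hasCompactSupport {E 𝕜 : Type*}
    [NormedAddCommGroup E] [NormedSpace ℝ E] [FiniteDimensional ℝ E] [MeasurableSpace E]
    [BorelSpace E] (μ : Measure E) [μ.IsAddHaarMeasure] [NormedField 𝕜] [NormedAlgebra ℝ 𝕜]
    {f g : E → 𝕜} (hf : ContDiff ℝ 1 f) (hg : ContDiff ℝ 1 g) (hfs : HasCompactSupport f) (v : E) :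
    ∫ x, f x * fderiv ℝ g x v ∂μ = -∫ x, fderiv ℝ f x v * g x ∂μ := by
  have hf'g : Integrable (fun x ↦ fderiv ℝ f x v * g x) μ :=
    (((hf.continuous_fderiv one_ne_zero).clm_apply continuous_const).mul
      hg.continuous).integrable_of_hasCompactSupport (hfs.fderiv_apply ℝ v).mul_right
  have hfg : Integrable (fun x ↦ f x * g x) μ :=
    (hf.continuous.mul hg.continuous).integrable_of_hasCompactSupport hfs.mul_right
  exact integral_mul_fderiv_eq_neg_fderiv_mul_of_integrable hf'g
    (integrable_mul_fderiv_apply_of_hasCompactSupport hf.continuous hg hfs v) hfg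
    (fun x _ ↦ hf.differentiable one_ne_zero x) (fun x _ ↦ hg.differentiable one_ne_zero x)

variable {E : Type*} [NormedAddCommGroup E] [InnerProductSpace ℝ E] [FiniteDimensional ℝ E]
  {f g : E → ℝ}

theorem integral_mul_laplacian_eq_neg_integral_inner_gradient [MeasurableSpace E] [BorelSpace E]
    (μ : Measure E) [μ.IsAddHaarMeasure] (hf : ContDiff ℝ 1 f) (hg : ContDiff ℝ 2 g)
    (hfs : HasCompactSupport f) :
    ∫ x, f x * Δ g x ∂μ = -∫ x, inner ℝ (∇ f x) (∇ g x) ∂μ := by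
  let b := stdOrthonormalBasis ℝ E
  have hg' : ContDiff ℝ 1 (fderiv ℝ g) := hg.fderiv_right (by norm_num)
  have hgb (i) : ContDiff ℝ 1 (fun x ↦ fderiv ℝ g x (b i)) := hg'.clm_apply contDiff_const
  calc
    ∫ x, f x * Δ g x ∂μ
        = ∑ i, ∫ x, f x * fderiv ℝ (fun y ↦ fderiv ℝ g y (b i)) x (b i) ∂μ := by
      simp_rw [laplacian_eq_sum_fderiv_fderiv b (hg'.differentiable one_ne_zero _), Finset.mul_sum]
      exact integral_finsetSum _ fun i _ ↦
        integrable_mul_fderiv_apply_of_hasCompactSupport hf.continuous (hgb i) hfs (b i)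
    _ = ∑ i, -∫ x, fderiv ℝ f x (b i) * fderiv ℝ g x (b i) ∂μ :=
      Finset.sum_congr rfl fun i _ ↦
        integral_mul_fderiv_eq_neg_fderiv_mul_of_hasCompactSupport μ hf (hgb i) hfs (b i)
    _ = -∫ x, ∑ i, fderiv ℝ f x (b i) * fderiv ℝ g x (b i) ∂μ := by
      rw [Finset.sum_neg_distrib, integral_finsetSum _ fun i _ ↦
        integrable_mul_fderiv_apply_of_hasCompactSupport
          ((hf.continuous_fderiv one_ne_zero).clm_apply continuous_const)
          (hg.of_le one_le_two) (hfs.fderiv_apply ℝ (b i)) (b i)]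
    _ = -∫ x, inner ℝ (∇ f x) (∇ g x) ∂μ := by
      simp_rw [sum_fderiv_mul_fderiv_eq_inner_gradient b]

theorem gradient_eq_zero_of_mul_laplacian_nonneg (hf : ContDiff ℝ 2 f)
    (hfs : HasCompactSupport f) (hΔ : ∀ x, 0 ≤ f x * Δ f x) (x : E) : ∇ f x = 0 := by
  borelize E
  by_contra hx
  have hf1 : ContDiff ℝ 1 f := hf.of_le one_le_two
  have energy_pos : 0 < ∫ y, ‖∇ f y‖ ^ 2 :=
    ((continuous_gradient_of_contDiff hf1).norm.pow
      2).integral_pos_of_hasCompactSupport_nonneg_nonzero (x := x)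
      ((hasCompactSupport_gradient hfs).comp_left (g := fun v ↦ ‖v‖ ^ 2) (by simp))
      (fun y ↦ sq_nonneg _) (by simpa using hx)
  have energy_identity : ∫ y, f y * Δ f y = -∫ y, ‖∇ f y‖ ^ 2 := by
    simpa only [real_inner_self_eq_norm_sq] using
      integral_mul_laplacian_eq_neg_integral_inner_gradient volume hf1 hf hfs
  have : 0 ≤ ∫ y, f y * Δ f y := integral_nonneg hΔ
  linarith

end Integral

theorem eq_zero_of_hasCompactSupport_of_fderiv_eq_zero {E F : Type*} [NormedAddCommGroup E]
    [NormedSpace ℝ E] [Nontrivial E] [NormedAddCommGroup F] [NormedSpace ℝ F] {f : E → F}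
    (hf : Differentiable ℝ f) (hfs : HasCompactSupport f) (hf' : ∀ x, fderiv ℝ f x = 0) (x : E) :
    f x = 0 := by
  obtain ⟨y, hy⟩ := (hasCompactSupport_iff_eventuallyEq.1 hfs).exists
  exact (is_const_of_fderiv_eq_zero hf hf' x y).trans hy

theorem sub_one_mul_sub_rpow_nonneg {t p : ℝ} (ht : 0 < t) (hp : p ≤ 1) :
    0 ≤ (t - 1) * (t - t ^ p) := by
  rcases le_total 1 t with one_le | le_one
  · exact mul_nonneg (sub_nonneg.2 one_le) (sub_nonneg.2 (rpow_le_self_of_one_le one_le hp))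
  · exact mul_nonneg_of_nonpos_of_nonpos (sub_nonpos.2 le_one)
      (sub_nonpos.2 (self_le_rpow_of_le_one ht.le le_one hp))

section Lichnerowicz

variable {E : Type*} [NormedAddCommGroup E] [InnerProductSpace ℝ E] [FiniteDimensional ℝ E]
  [Nontrivial E]

theorem eq_zero_of_mul_laplacian_nonneg {f : E → ℝ} (hf : ContDiff ℝ 2 f)
    (hfs : HasCompactSupport f) (hΔ : ∀ x, 0 ≤ f x * Δ f x) (x : E) : f x = 0 := by
  refine eq_zero_of_hasCompactSupport_of_fderiv_eq_zero (hf.differentiable two_ne_zero) hfs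
    (fun y ↦ ?_) x
  rw [← toDual_gradient, gradient_eq_zero_of_mul_laplacian_nonneg hf hfs hΔ, map_zero]

/-- In dimension `n ≥ 3` the Lichnerowicz exponent is `p = -(3n - 2) / (n - 2)`, which is `-7` for
`n = 3`. -/
theorem lichnerowicz_uniqueness_general {ξ R : E → ℝ} {p : ℝ} (hp : p ≤ 1) (hξ : ContDiff ℝ 2 ξ)
    (hξpos : ∀ x, 0 < ξ x) (hsupp : HasCompactSupport (fun x ↦ ξ x - 1)) (hR : ∀ x, 0 ≤ R x)
    (hPDE : ∀ x, Δ ξ x = R x * (ξ x - ξ x ^ p)) (x : E) : ξ x = 1 := by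
  refine sub_eq_zero.1 <|
    eq_zero_of_mul_laplacian_nonneg (hξ.sub contDiff_const) hsupp (fun y ↦ ?_) x
  calc
    0 ≤ R y * ((ξ y - 1) * (ξ y - ξ y ^ p)) :=
      mul_nonneg (hR y) (sub_one_mul_sub_rpow_nonneg (hξpos y) hp)
    _ = (ξ y - 1) * Δ (fun z ↦ ξ z - 1) y := by
      rw [laplacian_sub_const hξ.contDiffAt, hPDE]
      ring

end Lichnerowicz

/-- **Uniqueness argument from the proof of Theorem 4.2** (Euclidean form): if `ξ > 0` is
`C²`, `ξ - 1` has compact support, `R' ≥ 0` is continuous and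
`Δξ = (1/8) R' (ξ - ξ⁻⁷)`, then `ξ ≡ 1`. -/
theorem lichnerowicz_uniqueness
    (ξ R' : E3 → ℝ) (hξ : ContDiff ℝ 2 ξ) (hξpos : ∀ x, 0 < ξ x)
    (hsupp : HasCompactSupport (fun x => ξ x - 1))
    (hR'cont : Continuous R') (hR'nonneg : ∀ x, 0 ≤ R' x)
    (hPDE : ∀ x, laplacian ξ x = (1 / 8) * R' x * (ξ x - (ξ x) ^ (-7 : ℤ))) :
    ∀ x, ξ x = 1 := by
  have hdξ : Differentiable ℝ (fderiv ℝ ξ) :=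
    (hξ.fderiv_right (m := 1) (by norm_num)).differentiable one_ne_zero
  refine lichnerowicz_uniqueness_general (R := fun x ↦ 1 / 8 * R' x) (p := (-7 : ℤ)) (by norm_num)
    hξ hξpos hsupp (fun x ↦ mul_nonneg (by norm_num) (hR'nonneg x)) fun x ↦ ?_
  rw [← laplacian_eq_innerProductSpace_laplacian (hdξ x), hPDE, rpow_intCast]
end
end

section
/- Let P, Q : ℝ² → ℝ be smooth functions satisfying ∂₁P + ∂₂Q = 0 and ∂₁Q − ∂₂P = 0 everywhere on ℝ². Then there exists a smooth function f : ℝ² → ℝ with ∂₁∂₁f = P, ∂₁∂₂f = Q and ∂₂∂₂f = −P; in particular f is harmonic (∂₁²f + ∂₂²f = 0). Equivalently: every smooth symmetric trace-free 2-tensor field S on ℝ² (S₁₁ = −S₂₂ = P, S₁₂ = S₂₁ = Q) whose divergence vanishes (∂_b S_{ab} = 0 for a = 1,2) is the Hessian of a harmonic function. -/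
noncomputable section

abbrev V2 := Fin 2 → ℝ

/-- Partial derivative `∂ᵢ f` on `ℝ²`. -/
def pd2 (i : Fin 2) (f : V2 → ℝ) (x : V2) : ℝ := fderiv ℝ f x (Pi.single i 1)

/-!
Under `ℝ² ≃ ℂ` the two divergence equations are the Cauchy-Riemann equations for `P - iQ`, which is
therefore entire and has an entire second primitive `K`. A partial derivative of `Re K` in the
direction `1` or `I` is the real part of that direction times `K'`, so the Hessian of `Re K` has the
entries `Re K'' = P`, `Re (I K'') = Q` and `Re (I² K'') = -P`.
-/

open scoped ContDiff

/-- The identification `(x₀, x₁) ↦ x₀ + x₁ I` of the coordinate plane with `ℂ`. It is only a linear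
homeomorphism, since `V2` carries the sup norm. -/
def toComplex : V2 ≃L[ℝ] ℂ := Complex.basisOneI.equivFunL.symm

theorem toComplex_single (i : Fin 2) : toComplex (Pi.single i 1) = Complex.basisOneI i := by
  rw [toComplex, ContinuousLinearEquiv.symm_apply_eq]
  ext j
  simp [-Complex.coe_basisOneI, Finsupp.single_apply, Pi.single_apply, eq_comm]

theorem pd2_comp_toComplex (u : ℂ → ℝ) (i : Fin 2) (x : V2) :
    pd2 i (u ∘ toComplex) x = fderiv ℝ u (toComplex x) (Complex.basisOneI i) := by
  simp [pd2, toComplex.comp_right_fderiv, toComplex_single]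

theorem fderiv_comp_toComplex_symm (u : V2 → ℝ) (i : Fin 2) (z : ℂ) :
    fderiv ℝ (u ∘ toComplex.symm) z (Complex.basisOneI i) = pd2 i u (toComplex.symm z) := by
  have h := pd2_comp_toComplex (u ∘ toComplex.symm) i (toComplex.symm z)
  rw [toComplex.apply_symm_apply] at h
  rw [← h, Function.comp_assoc, toComplex.symm_comp_self, Function.comp_id]

theorem differentiableAt_ofReal_add_ofReal_mul_I_of_cauchyRiemann {u v : ℂ → ℝ} {z : ℂ}
    (hu : DifferentiableAt ℝ u z) (hv : DifferentiableAt ℝ v z)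
    (h_one : fderiv ℝ u z 1 = fderiv ℝ v z Complex.I)
    (h_I : fderiv ℝ u z Complex.I = -fderiv ℝ v z 1) :
    DifferentiableAt ℂ (fun w => (u w : ℂ) + v w * Complex.I) z := by
  have h : HasFDerivAt (fun w => (u w : ℂ) + v w * Complex.I)
      (Complex.ofRealCLM ∘L fderiv ℝ u z +
        (Complex.ofRealCLM ∘L fderiv ℝ v z).smulRight Complex.I) z :=
    (Complex.ofRealCLM.hasFDerivAt.comp z hu.hasFDerivAt).add
      ((Complex.ofRealCLM.hasFDerivAt.comp z hv.hasFDerivAt).smul_const Complex.I)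
  refine differentiableAt_complex_iff_differentiableAt_real.2 ⟨h.differentiableAt, ?_⟩
  rw [h.fderiv]
  apply Complex.ext <;> simp [h_one, h_I]

theorem differentiable_ofReal_sub_ofReal_mul_I_of_divfree {P Q : V2 → ℝ}
    (hP : Differentiable ℝ P) (hQ : Differentiable ℝ Q)
    (hdiv1 : ∀ x, pd2 0 P x + pd2 1 Q x = 0) (hdiv2 : ∀ x, pd2 0 Q x - pd2 1 P x = 0) :
    Differentiable ℂ fun z =>
      (P (toComplex.symm z) : ℂ) - Q (toComplex.symm z) * Complex.I := by
  intro z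
  have h_single (u : V2 → ℝ) :
      fderiv ℝ (u ∘ toComplex.symm) z 1 = pd2 0 u (toComplex.symm z) ∧
        fderiv ℝ (u ∘ toComplex.symm) z Complex.I = pd2 1 u (toComplex.symm z) := by
    simp [← fderiv_comp_toComplex_symm]
  have h_neg (i : Fin 2) (x : V2) : pd2 i (-Q) x = -pd2 i Q x := by simp [pd2, fderiv_neg]
  have h := differentiableAt_ofReal_add_ofReal_mul_I_of_cauchyRiemann
    (u := P ∘ toComplex.symm) (v := (-Q) ∘ toComplex.symm) (z := z)
    (by fun_prop) (by fun_prop)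
    (by rw [(h_single P).1, (h_single (-Q)).2, h_neg]; linarith [hdiv1 (toComplex.symm z)])
    (by rw [(h_single P).2, (h_single (-Q)).1, h_neg]; linarith [hdiv2 (toComplex.symm z)])
  simpa [sub_eq_add_neg] using h

theorem pd2_re_comp_toComplex {F : ℂ → ℂ} {F' : ℂ} {x : V2}
    (hF : HasDerivAt F F' (toComplex x)) (i : Fin 2) :
    pd2 i (fun y => (F (toComplex y)).re) x = (Complex.basisOneI i * F').re := by
  have h : HasFDerivAt (fun z => (F z).re) _ (toComplex x) :=
    Complex.reCLM.hasFDerivAt.comp _ (hF.hasFDerivAt.restrictScalars ℝ)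
  rw [← Function.comp_def (fun z => (F z).re), pd2_comp_toComplex, h.fderiv]
  simp

theorem pd2_pd2_re_comp_toComplex {K G : ℂ → ℂ} {G' : ℂ} {x : V2}
    (hK : ∀ z, HasDerivAt K (G z) z) (hG : HasDerivAt G G' (toComplex x)) (i j : Fin 2) :
    pd2 i (fun y => pd2 j (fun y => (K (toComplex y)).re) y) x =
      (Complex.basisOneI i * (Complex.basisOneI j * G')).re := by
  simp only [pd2_re_comp_toComplex (hK _) j]
  exact pd2_re_comp_toComplex (hG.const_mul (Complex.basisOneI j)) i

theorem contDiff_re_comp_toComplex {K : ℂ → ℂ} (hK : Differentiable ℂ K) {n : ℕ∞ω} :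
    ContDiff ℝ n fun x => (K (toComplex x)).re :=
  Complex.reCLM.contDiff.comp ((hK.contDiff.restrict_scalars ℝ).comp toComplex.contDiff)

theorem tracefree_divfree_is_hessian_of_harmonic_general
    (P Q : V2 → ℝ) (hP : Differentiable ℝ P) (hQ : Differentiable ℝ Q)
    (hdiv1 : ∀ x, pd2 0 P x + pd2 1 Q x = 0)
    (hdiv2 : ∀ x, pd2 0 Q x - pd2 1 P x = 0) :
    ∃ f : V2 → ℝ, ContDiff ℝ ω f ∧
      (∀ x, pd2 0 (fun y => pd2 0 f y) x = P x) ∧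
      (∀ x, pd2 0 (fun y => pd2 1 f y) x = Q x) ∧
      (∀ x, pd2 1 (fun y => pd2 1 f y) x = -P x) := by
  have hF := differentiable_ofReal_sub_ofReal_mul_I_of_divfree hP hQ hdiv1 hdiv2
  obtain ⟨G, hG⟩ := hF.isExactOn_univ
  have hG_diff : Differentiable ℂ G := fun z => (hG z trivial).differentiableAt
  obtain ⟨K, hK⟩ := hG_diff.isExactOn_univ
  have hK_diff : Differentiable ℂ K := fun z => (hK z trivial).differentiableAt
  have hessian (i j : Fin 2) (x : V2) :=
    pd2_pd2_re_comp_toComplex (fun z => hK z trivial) (hG (toComplex x) trivial) i j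
  refine ⟨fun x => (K (toComplex x)).re, contDiff_re_comp_toComplex hK_diff, ?_, ?_, ?_⟩ <;>
    intro x <;> simp [hessian]

/-- **Claim (28g) of Section 2**: every smooth symmetric trace-free divergence-free 2-tensor
on `ℝ²` (components `S₁₁ = -S₂₂ = P`, `S₁₂ = S₂₁ = Q` with `∂₁P + ∂₂Q = 0` and
`∂₁Q - ∂₂P = 0`) is the Hessian of a harmonic function: there is a smooth `f` with
`f_{,11} = P`, `f_{,12} = Q`, `f_{,22} = -P`. -/
theorem tracefree_divfree_is_hessian_of_harmonic
    (P Q : V2 → ℝ) (hP : ContDiff ℝ (⊤ : ℕ∞) P) (hQ : ContDiff ℝ (⊤ : ℕ∞) Q)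
    (hdiv1 : ∀ x, pd2 0 P x + pd2 1 Q x = 0)
    (hdiv2 : ∀ x, pd2 0 Q x - pd2 1 P x = 0) :
    ∃ f : V2 → ℝ, ContDiff ℝ (⊤ : ℕ∞) f ∧
      (∀ x, pd2 0 (fun y => pd2 0 f y) x = P x) ∧
      (∀ x, pd2 0 (fun y => pd2 1 f y) x = Q x) ∧
      (∀ x, pd2 1 (fun y => pd2 1 f y) x = -P x) := by
  obtain ⟨f, hf, hessian⟩ := tracefree_divfree_is_hessian_of_harmonic_general P Q
    (hP.differentiable (by simp)) (hQ.differentiable (by simp)) hdiv1 hdiv2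
  exact ⟨f, hf.of_le le_top, hessian⟩
end
end
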